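/- Let M and G be real symmetric n×n matrices all of whose eigenvalues lie in [0,1] (equivalently, M, I_n − M, G, and I_n − G are all positive semidefinite), and suppose fix(M) ∩ fix(G) = {0}. Then ‖M G x‖₂ < ‖x‖₂ for every nonzero x ∈ ℝ^n, and consequently every complex eigenvalue of the product MG has modulus strictly less than 1. -/

import Mathlib

open Matrix

/-- The Euclidean (ℓ²) norm on `Fin n → ℝ`. -/
noncomputable def norm2 {n : ℕ} (x : Fin n → ℝ) : ℝ := Real.sqrt (∑ i, x i ^ 2)

lemma psd_nonneg {n : ℕ} {A : Matrix (Fin n) (Fin n) ℝ} (hA : A.PosSemidef) (x : Fin n → ℝ) :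
    0 ≤ x ⬝ᵥ (A *ᵥ x) := by
  simpa using hA.dotProduct_mulVec_nonneg x

lemma psd_symm {n : ℕ} {A : Matrix (Fin n) (Fin n) ℝ} (hA : A.PosSemidef) (x y : Fin n → ℝ) :
    (A *ᵥ x) ⬝ᵥ y = x ⬝ᵥ (A *ᵥ y) := by
  have h : Aᵀ = A := by simpa using hA.1.eq
  rw [dotProduct_mulVec, ← mulVec_transpose, h]

lemma contr {n : ℕ} {A : Matrix (Fin n) (Fin n) ℝ} (hA : A.PosSemidef)
    (hA1 : ((1 : Matrix (Fin n) (Fin n) ℝ) - A).PosSemidef) (x : Fin n → ℝ) :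
    (A *ᵥ x) ⬝ᵥ (A *ᵥ x) + (x - A *ᵥ x) ⬝ᵥ (x - A *ᵥ x) ≤ x ⬝ᵥ x := by
  have h1 := psd_nonneg hA1 (A *ᵥ x)
  have h2 := psd_nonneg hA (x - A *ᵥ x)
  have e1 := psd_symm hA x (A *ᵥ x)
  have e2 := psd_symm hA x (A *ᵥ (A *ᵥ x))
  have e3 := dotProduct_comm x (A *ᵥ x)
  simp only [sub_mulVec, one_mulVec, mulVec_sub, dotProduct_sub, sub_dotProduct] at *
  linarith

lemma dot_lt {n : ℕ} (M G : Matrix (Fin n) (Fin n) ℝ)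
    (hM : M.PosSemidef) (hM1 : ((1 : Matrix (Fin n) (Fin n) ℝ) - M).PosSemidef)
    (hG : G.PosSemidef) (hG1 : ((1 : Matrix (Fin n) (Fin n) ℝ) - G).PosSemidef)
    (hfix : ∀ x : Fin n → ℝ, M *ᵥ x = x → G *ᵥ x = x → x = 0) (x : Fin n → ℝ) (hx : x ≠ 0) :
    ((M * G) *ᵥ x) ⬝ᵥ ((M * G) *ᵥ x) < x ⬝ᵥ x := by
  by_contra! hc
  rw [← mulVec_mulVec] at hc
  have h1 := contr hG hG1 x
  have h2 := contr hM hM1 (G *ᵥ x)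
  have p (y : Fin n → ℝ) : 0 ≤ y ⬝ᵥ y := Finset.sum_nonneg fun i _ => mul_self_nonneg (y i)
  have p1 := p (x - G *ᵥ x)
  have p2 := p (G *ᵥ x - M *ᵥ (G *ᵥ x))
  have z1 : x - G *ᵥ x = 0 := dotProduct_self_eq_zero.1 (by linarith)
  have z2 : G *ᵥ x - M *ᵥ (G *ᵥ x) = 0 := dotProduct_self_eq_zero.1 (by linarith)
  have g : G *ᵥ x = x := (sub_eq_zero.1 z1).symm
  rw [g] at z2
  exact hx (hfix x (sub_eq_zero.1 z2).symm g)

theorem stmt5 (n : ℕ) (M G : Matrix (Fin n) (Fin n) ℝ)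
    (hM : M.PosSemidef) (hM1 : ((1 : Matrix (Fin n) (Fin n) ℝ) - M).PosSemidef)
    (hG : G.PosSemidef) (hG1 : ((1 : Matrix (Fin n) (Fin n) ℝ) - G).PosSemidef)
    (hfix : ∀ x : Fin n → ℝ, M *ᵥ x = x → G *ᵥ x = x → x = 0) :
    (∀ x : Fin n → ℝ, x ≠ 0 → norm2 ((M * G) *ᵥ x) < norm2 x) ∧
    (∀ μ ∈ spectrum ℂ ((M * G).map Complex.ofReal), ‖μ‖ < 1) := by
  have key := dot_lt M G hM hM1 hG hG1 hfix
  generalize M * G = B at key ⊢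
  constructor
  · intro x hx
    have h := key x hx
    simp only [dotProduct, ← pow_two] at h
    exact Real.sqrt_lt_sqrt (Finset.sum_nonneg fun i _ => sq_nonneg _) h
  · intro μ hμ
    rw [← Matrix.spectrum_toLin', ← Module.End.hasEigenvalue_iff_mem_spectrum] at hμ
    obtain ⟨z, hz⟩ := hμ.exists_hasEigenvector
    have hz0 := hz.2
    have hz1 := hz.apply_eq_smul
    rw [Matrix.toLin'_apply] at hz1
    set a : Fin n → ℝ := fun i => (z i).re with ha
    set b : Fin n → ℝ := fun i => (z i).im with hb
    have ea : B *ᵥ a = μ.re • a - μ.im • b := by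
      ext i
      have := congrArg Complex.re (congrFun hz1 i)
      simpa [mulVec, dotProduct, ha, hb] using this
    have eb : B *ᵥ b = μ.re • b + μ.im • a := by
      ext i
      have := congrArg Complex.im (congrFun hz1 i)
      simpa [mulVec, dotProduct, ha, hb] using this
    have le (y : Fin n → ℝ) : (B *ᵥ y) ⬝ᵥ (B *ᵥ y) ≤ y ⬝ᵥ y := by
      by_cases hy : y = 0
      · simp [hy]
      · exact (key y hy).le
    have p (y : Fin n → ℝ) : 0 ≤ y ⬝ᵥ y := Finset.sum_nonneg fun i _ => mul_self_nonneg (y i)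
    have lt : (B *ᵥ a) ⬝ᵥ (B *ᵥ a) + (B *ᵥ b) ⬝ᵥ (B *ᵥ b) < a ⬝ᵥ a + b ⬝ᵥ b := by
      by_cases h0 : a = 0
      · have hb0 : b ≠ 0 := by
          intro h
          apply hz0
          ext i
          exact Complex.ext (congrFun h0 i) (congrFun h i)
        linarith [le a, key b hb0]
      · linarith [le b, key a h0]
    have e : (B *ᵥ a) ⬝ᵥ (B *ᵥ a) + (B *ᵥ b) ⬝ᵥ (B *ᵥ b)
        = (μ.re ^ 2 + μ.im ^ 2) * (a ⬝ᵥ a + b ⬝ᵥ b) := by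
      rw [ea, eb]
      simp only [dotProduct_sub, sub_dotProduct, dotProduct_add, add_dotProduct,
        smul_dotProduct, dotProduct_smul, smul_eq_mul, dotProduct_comm b a]
      ring
    rw [e] at lt
    have hs : ‖μ‖ ^ 2 = μ.re ^ 2 + μ.im ^ 2 := by
      rw [Complex.sq_norm, Complex.normSq_apply]; ring
    rw [← hs] at lt
    by_contra! hc
    nlinarith [p a, p b, one_le_pow₀ hc (n := 2)]
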